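/- If (a′,b′) ∈ ℕ×ℕ is a possible A0′, i.e. (a′,b′) is the end point of some admissible chain, then b′ < a′ and b′ ≤ (a′ − b′ − 1)². -/

import Mathlib

open MvPolynomial

noncomputable section

variable {K : Type*} [Field K] [CharZero K]

/-- The support of `P` as a set of pairs `(i,j)` of exponents of `x^i y^j`. -/
def Supp (P : MvPolynomial (Fin 2) K) : Set (ℕ × ℕ) :=
  {p | MvPolynomial.coeff (Finsupp.single 0 p.1 + Finsupp.single 1 p.2) P ≠ 0}

/-- The Jacobian bracket `[P,Q] = ∂ₓP ∂_yQ − ∂ₓQ ∂_yP`. -/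
def Jb (P Q : MvPolynomial (Fin 2) K) : MvPolynomial (Fin 2) K :=
  pderiv 0 P * pderiv 1 Q - pderiv 0 Q * pderiv 1 P

/-- The `(ρ,σ)`-degree `v_{ρ,σ}(P)` (the maximum of `ρi+σj` on the support). -/
def wdeg (ρ σ : ℤ) (P : MvPolynomial (Fin 2) K) : ℤ :=
  sSup {d : ℤ | ∃ p ∈ Supp P, d = ρ * (p.1 : ℤ) + σ * (p.2 : ℤ)}

/-- The support of the `(ρ,σ)`-leading form of `P`. -/
def LeadSupp (ρ σ : ℤ) (P : MvPolynomial (Fin 2) K) : Set (ℕ × ℕ) :=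
  {p | p ∈ Supp P ∧ ρ * (p.1 : ℤ) + σ * (p.2 : ℤ) = wdeg ρ σ P}

/-- `P` is `(ρ,σ)`-homogeneous. -/
def IsHomog (ρ σ : ℤ) (P : MvPolynomial (Fin 2) K) : Prop :=
  ∀ p ∈ Supp P, ∀ q ∈ Supp P,
    ρ * (p.1 : ℤ) + σ * (p.2 : ℤ) = ρ * (q.1 : ℤ) + σ * (q.2 : ℤ)

/-- `P` is a monomial: its support has at most one point. -/
def IsMonomial (P : MvPolynomial (Fin 2) K) : Prop := (Supp P).Subsingleton

/-- `e` is the point `en_{ρ,σ}(P)`: the point of the support of the leading form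
with largest second coordinate. -/
def IsEn (ρ σ : ℤ) (P : MvPolynomial (Fin 2) K) (e : ℕ × ℕ) : Prop :=
  e ∈ LeadSupp ρ σ P ∧ ∀ q ∈ LeadSupp ρ σ P, q.2 ≤ e.2

/-- `e` is the point `st_{ρ,σ}(P)`: the point of the support of the leading form
with smallest second coordinate. -/
def IsSt (ρ σ : ℤ) (P : MvPolynomial (Fin 2) K) (e : ℕ × ℕ) : Prop :=
  e ∈ LeadSupp ρ σ P ∧ ∀ q ∈ LeadSupp ρ σ P, e.2 ≤ q.2

/-- An admissible chain of length `k`: points `C 0, …, C k`, polynomials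
`Rp 1, …, Rp k` and directions `dir 1, …, dir k` satisfying conditions
(i)–(viii) of Definition "cadena admisible". -/
structure AdmChain (K : Type*) [Field K] [CharZero K] (k : ℕ) where
  C : ℕ → ℕ × ℕ
  Rp : ℕ → MvPolynomial (Fin 2) K
  dir : ℕ → ℤ × ℤ
  hdir : ∀ j, 1 ≤ j → j ≤ k →
    Int.gcd (dir j).1 (dir j).2 = 1 ∧ 0 < (dir j).1 ∧ (dir j).1 + (dir j).2 < 0
  hC0 : ∃ l : ℕ, 1 ≤ l ∧ C 0 = (l, 0)
  hincr : ∀ j, 2 ≤ j → j ≤ k →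
    0 < (dir (j - 1)).1 * (dir j).2 - (dir (j - 1)).2 * (dir j).1
  hhom : ∀ j, 1 ≤ j → j ≤ k → IsHomog (dir j).1 (dir j).2 (Rp j)
  hmono : ∀ j, 1 ≤ j → j ≤ k → ¬ IsMonomial (Rp j)
  hst : ∀ j, 1 ≤ j → j ≤ k → IsSt (dir j).1 (dir j).2 (Rp j) (C (j - 1))
  hen : ∀ j, 1 ≤ j → j ≤ k → IsEn (dir j).1 (dir j).2 (Rp j) (C j)
  hdiag : ∀ j, 1 ≤ j → j ≤ k → (C j).2 < (C j).1
  hval : ∀ j, 1 ≤ j → j ≤ k →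
    (dir j).1 ≤ (dir j).1 * ((C j).1 : ℤ) + (dir j).2 * ((C j).2 : ℤ)
  hG : ∀ j, 1 ≤ j → j ≤ k → ∃ (G : MvPolynomial (Fin 2) K) (i : ℕ), 1 ≤ i ∧
    IsHomog (dir j).1 (dir j).2 G ∧ Jb G (Rp j) = (Rp j) ^ i

/-- A point of `ℕ × ℕ` is a possible `A₀′` if it is the end point of some
admissible chain. -/
def PossibleA0 (K : Type*) [Field K] [CharZero K] (p : ℕ × ℕ) : Prop :=
  ∃ (k : ℕ) (ch : AdmChain K k), ch.C k = p

/-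
Only the last edge of the chain matters. Let `(ρ, σ)`, `R`, `G` be its data, `A = st R`,
`B = en R = (a', b')`, let `m` be the weight of `R` and `e = -(ρ + σ) > 0`. By Euler's identity
`[G, R] = R ^ (k + 1)` becomes, at `x = 1`, the equation `n g r' - m g' r = ρ r ^ (k + 1)` with
`n = k m - e`. At a prime factor `f` of `X r` either the orders are resonant,
`n ord_f r = m ord_f g`, or `ord_f g ≥ k ord_f r + 1`; without any resonance the degree of `g` would
be too large. A resonance at `f ≠ X` gives `m ∣ e ord_f r`, where `ord_f r` is less than the number
of terms of `r`, which is at most `(b' - A.2) / ρ + 1`. A resonance at `X` makes `A.1 - A.2` a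
positive multiple of `m`, because `ρ` and `σ` are coprime. Either way `m ≤ D := a' - b' - 1`, and
then `ρ ≤ m = ρ (D + 1) - e b'` yields `b' ≤ ρ D ≤ D ^ 2`.
-/

section WeightedWronskian

open Polynomial

/-- The Wronskian `m p q' - n p' q` of `p` and `q` with weights `m` and `n`; for `m = n = 1` it is
the usual one. It is what the Jacobian bracket of weighted homogeneous polynomials of degrees `m`
and `n` becomes after setting `x = 1`. -/
def wtWronskian {R : Type*} [CommRing R] (m n : ℤ) (p q : R[X]) : R[X] :=
  m • (p * derivative q) - n • (derivative p * q)

lemma coeff_X_mul_derivative {R : Type*} [Semiring R] (p : R[X]) (j : ℕ) :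
    (Polynomial.X * derivative p).coeff j = p.coeff j * j := by
  cases j with
  | zero => simp
  | succ j => rw [Polynomial.coeff_X_mul, coeff_derivative, Nat.cast_succ]

lemma natDegree_X_mul_derivative_le {R : Type*} [Semiring R] (p : R[X]) :
    (Polynomial.X * derivative p).natDegree ≤ p.natDegree := by
  refine natDegree_le_iff_coeff_eq_zero.mpr fun j hj => ?_
  rw [coeff_X_mul_derivative, coeff_eq_zero_of_natDegree_lt hj, zero_mul]

lemma mul_natDegree_eq_of_natDegree_wtWronskian_lt {R : Type*} [CommRing R]
    [NoZeroDivisors R] [CharZero R] {m n : ℤ} {p q : R[X]} (hp : p ≠ 0) (hq : q ≠ 0)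
    (h : (wtWronskian m n p q).natDegree + 1 < p.natDegree + q.natDegree) :
    m * q.natDegree = n * p.natDegree := by
  have hX : Polynomial.X * wtWronskian m n p q =
      m • (p * (Polynomial.X * derivative q)) - n • (Polynomial.X * derivative p * q) := by
    simp only [wtWronskian, zsmul_eq_mul]; ring
  have hzero : (Polynomial.X * wtWronskian m n p q).coeff (p.natDegree + q.natDegree) = 0 :=
    coeff_eq_zero_of_natDegree_lt <| natDegree_mul_le.trans_lt <| by
      rwa [Polynomial.natDegree_X, add_comm]
  rw [hX, Polynomial.coeff_sub, Polynomial.coeff_smul, Polynomial.coeff_smul,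
    coeff_mul_add_eq_of_natDegree_le le_rfl (natDegree_X_mul_derivative_le q),
    coeff_mul_add_eq_of_natDegree_le (natDegree_X_mul_derivative_le p) le_rfl,
    coeff_X_mul_derivative, coeff_X_mul_derivative, zsmul_eq_mul, zsmul_eq_mul] at hzero
  have hlead : ((m * q.natDegree - n * p.natDegree : ℤ) : R) *
      (p.leadingCoeff * q.leadingCoeff) = 0 := by
    simp only [leadingCoeff]; push_cast; linear_combination hzero
  have hne : p.leadingCoeff * q.leadingCoeff ≠ 0 :=
    mul_ne_zero (leadingCoeff_ne_zero.mpr hp) (leadingCoeff_ne_zero.mpr hq)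
  exact sub_eq_zero.mp (Int.cast_eq_zero.mp ((mul_eq_zero_iff_right hne).mp hlead))

lemma mul_derivative_pow_mul {R : Type*} [CommRing R] (f p : R[X]) (k : ℕ) :
    f * derivative (f ^ k * p) = f ^ k * (k * derivative f * p + f * derivative p) := by
  cases k with
  | zero => simp
  | succ k =>
    simp only [derivative_mul, derivative_pow_succ, map_add, map_natCast, map_one]
    push_cast
    ring

lemma mul_wtWronskian_pow_mul {R : Type*} [CommRing R] (m n : ℤ) (f p q : R[X]) (k l : ℕ) :
    f * wtWronskian m n (f ^ k * p) (f ^ l * q) =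
      f ^ (k + l) * ((m * l - n * k) • (derivative f * p * q) + f * wtWronskian m n p q) := by
  have hp := mul_derivative_pow_mul f p k
  have hq := mul_derivative_pow_mul f q l
  simp only [wtWronskian, zsmul_eq_mul]
  push_cast
  linear_combination m * (f ^ k * p) * hq - n * (f ^ l * q) * hp

lemma mul_multiplicity_eq_of_pow_dvd_wtWronskian {F : Type*} [Field F] [CharZero F] {m n : ℤ}
    {f p q : F[X]} (hf : Irreducible f) (hp : p ≠ 0) (hq : q ≠ 0)
    (h : f ^ (multiplicity f p + multiplicity f q) ∣ wtWronskian m n p q) :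
    m * multiplicity f q = n * multiplicity f p := by
  obtain ⟨p₁, hp₁, hfp⟩ :=
    (FiniteMultiplicity.of_prime_left hf.prime hp).exists_eq_pow_mul_and_not_dvd
  obtain ⟨q₁, hq₁, hfq⟩ :=
    (FiniteMultiplicity.of_prime_left hf.prime hq).exists_eq_pow_mul_and_not_dvd
  generalize multiplicity f p = k, multiplicity f q = l at *
  subst hp₁ hq₁
  obtain ⟨w, hw⟩ := h
  have hcancel := mul_wtWronskian_pow_mul m n f p₁ q₁ k l
  rw [hw, mul_left_comm] at hcancel
  have hdvd : f ∣ (m * l - n * k : ℤ) • (derivative f * p₁ * q₁) :=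
    (dvd_add_left (dvd_mul_right f _)).mp
      ⟨w, (mul_left_cancel₀ (pow_ne_zero _ hf.ne_zero) hcancel).symm⟩
  have hf' : ¬ f ∣ derivative f := fun hdvd =>
    hf.not_isUnit (hf.separable.isUnit_of_dvd' dvd_rfl hdvd)
  by_contra hne
  have hunit : IsUnit ((m * l - n * k : ℤ) : F[X]) := by
    rw [← map_intCast (Polynomial.C : F →+* F[X]), Polynomial.isUnit_C, isUnit_iff_ne_zero]
    exact_mod_cast sub_ne_zero.mpr hne
  rw [zsmul_eq_mul, hunit.dvd_mul_left] at hdvd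
  rcases hf.prime.dvd_or_dvd hdvd with h | h
  · exact (hf.prime.dvd_or_dvd h).elim hf' hfp
  · exact hfq h

lemma squarefree_mul_pow_dvd {M : Type*} [CommMonoidWithZero M] [UniqueFactorizationMonoid M]
    {s a b : M} {k : ℕ} (hs : Squarefree s) (h0 : s * a ^ k ≠ 0)
    (h : ∀ p, Prime p → p ∣ s * a → k * emultiplicity p a + 1 ≤ emultiplicity p b) :
    s * a ^ k ∣ b := by
  refine (UniqueFactorizationMonoid.dvd_iff_emultiplicity_le h0).mpr fun p hp => ?_
  rw [emultiplicity_mul hp, emultiplicity_pow hp]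
  by_cases hdvd : p ∣ s * a
  · have hle : emultiplicity p s ≤ 1 :=
      ((squarefree_iff_emultiplicity_le_one s).mp hs p).resolve_right hp.not_isUnit
    calc emultiplicity p s + k * emultiplicity p a ≤ 1 + k * emultiplicity p a := by gcongr
      _ = k * emultiplicity p a + 1 := add_comm _ _
      _ ≤ emultiplicity p b := h p hp hdvd
  · have hs' : emultiplicity p s = 0 :=
      emultiplicity_eq_zero.mpr fun h => hdvd (h.mul_right a)
    have ha' : emultiplicity p a = 0 :=
      emultiplicity_eq_zero.mpr fun h => hdvd (h.mul_left s)
    simp [hs', ha']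

lemma multiplicity_X_eq_natTrailingDegree {R : Type*} [CommRing R] {p : R[X]} (hp : p ≠ 0) :
    multiplicity Polynomial.X p = p.natTrailingDegree := by
  classical
  rw [← rootMultiplicity_eq_natTrailingDegree', rootMultiplicity_eq_multiplicity, if_neg hp,
    map_zero, sub_zero]

lemma support_X_mul_derivative_sub {R : Type*} [CommRing R] [NoZeroDivisors R] [CharZero R]
    (p : R[X]) (j : ℕ) :
    (Polynomial.X * derivative p - j • p).support = p.support.erase j := by
  ext i
  have hcoeff : (Polynomial.X * derivative p - j • p).coeff i = p.coeff i * (i - j) := by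
    rw [Polynomial.coeff_sub, coeff_X_mul_derivative, Polynomial.coeff_smul, nsmul_eq_mul]
    ring
  rw [Polynomial.mem_support_iff, hcoeff, Finset.mem_erase, Polynomial.mem_support_iff,
    mul_ne_zero_iff, sub_ne_zero, Nat.cast_injective.ne_iff, and_comm]

-- If `f ^ (k + 1) ∣ p` then `f ^ k` divides `X p' - (deg p) p`, which has one term less.
lemma lt_card_support_of_pow_dvd {F : Type*} [Field F] [CharZero F] {f : F[X]}
    (hf : Irreducible f) (hfX : ¬ f ∣ Polynomial.X) {p : F[X]} (hp : p ≠ 0) {k : ℕ}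
    (h : f ^ k ∣ p) : k < p.support.card := by
  induction k generalizing p with
  | zero => exact Finset.card_pos.mpr (Polynomial.support_nonempty.mpr hp)
  | succ k ih =>
    set q : F[X] := Polynomial.X * derivative p - p.natDegree • p with hq
    have hcard : q.support.card + 1 = p.support.card := by
      rw [hq, support_X_mul_derivative_sub]
      exact Finset.card_erase_add_one (natDegree_mem_support_of_nonzero hp)
    have hq0 : q ≠ 0 := by
      intro hq0
      have hone : p.support.card ≤ 1 := by simp [← hcard, hq0]
      obtain ⟨j, c, hpj⟩ := card_support_le_one_iff_monomial.mp hone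
      have hc : c ≠ 0 := by rintro rfl; exact hp (by simpa using hpj)
      have hdvd : f ∣ Polynomial.C c * Polynomial.X ^ j := by
        rw [Polynomial.C_mul_X_pow_eq_monomial, ← hpj]
        exact (dvd_pow_self f k.succ_ne_zero).trans h
      rw [(Polynomial.isUnit_C.mpr hc.isUnit).dvd_mul_left] at hdvd
      exact hfX (hf.prime.dvd_of_dvd_pow hdvd)
    have hdvd : f ^ k ∣ q :=
      dvd_sub ((pow_sub_one_dvd_derivative_of_pow_dvd h).mul_left _)
        (((pow_dvd_pow f k.le_succ).trans h).trans (dvd_smul_of_dvd _ dvd_rfl))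
    have := ih hq0 hdvd
    omega

lemma exists_irreducible_dvd_not_dvd_X {F : Type*} [Field F] {p : F[X]}
    (h : p.natTrailingDegree < p.natDegree) : ∃ f, Irreducible f ∧ f ∣ p ∧ ¬ f ∣ Polynomial.X := by
  have hp : p ≠ 0 := by rintro rfl; simp at h
  obtain ⟨q, hpq, hXq⟩ :=
    (FiniteMultiplicity.of_prime_left Polynomial.prime_X hp).exists_eq_pow_mul_and_not_dvd
  rw [multiplicity_X_eq_natTrailingDegree hp] at hpq
  have hq0 : q ≠ 0 := by rintro rfl; exact hXq (dvd_zero _)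
  have hunit : ¬ IsUnit q := by
    intro hq
    have hdeg := congrArg natDegree hpq
    rw [natDegree_mul (pow_ne_zero _ Polynomial.X_ne_zero) hq0, natDegree_X_pow,
      natDegree_eq_zero_of_isUnit hq] at hdeg
    omega
  obtain ⟨f, hf, hfq⟩ := WfDvdMonoid.exists_irreducible_factor hunit hq0
  refine ⟨f, hf, hpq ▸ hfq.mul_left _, fun hfX => hXq ?_⟩
  exact (hf.associated_of_dvd Polynomial.irreducible_X hfX).symm.dvd.trans hfq

section EqPow

variable {F : Type*} [Field F] [CharZero F] {m n c : ℤ} {k : ℕ} {p q : F[X]}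

lemma natDegree_le_of_wtWronskian_eq_smul_pow (hp : p ≠ 0) (hq : q ≠ 0) (hm : 0 < m)
    (hn : n ≤ k * m) (h : wtWronskian n m q p = c • p ^ (k + 1)) :
    q.natDegree ≤ k * p.natDegree + 1 := by
  by_contra! hlt
  have hdeg : (wtWronskian n m q p).natDegree ≤ (k + 1) * p.natDegree := by
    rw [h]
    exact (natDegree_smul_le _ _).trans natDegree_pow_le
  have hres : n * p.natDegree = m * q.natDegree :=
    mul_natDegree_eq_of_natDegree_wtWronskian_lt hq hp (by linarith)
  have hle : m * q.natDegree ≤ m * (k * p.natDegree : ℤ) := by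
    rw [← hres]; nlinarith
  have : (q.natDegree : ℤ) ≤ k * p.natDegree := le_of_mul_le_mul_left hle hm
  norm_cast at this
  omega

lemma mul_emultiplicity_add_one_le_of_wtWronskian_eq_smul_pow {f : F[X]} (hf : Irreducible f)
    (hp : p ≠ 0) (hq : q ≠ 0) (h : wtWronskian n m q p = c • p ^ (k + 1))
    (hne : n * multiplicity f p ≠ m * multiplicity f q) :
    k * emultiplicity f p + 1 ≤ emultiplicity f q := by
  have hfin {a : F[X]} (ha : a ≠ 0) : emultiplicity f a = multiplicity f a :=
    (FiniteMultiplicity.of_prime_left hf.prime ha).emultiplicity_eq_multiplicity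
  rw [hfin hp, hfin hq]
  norm_cast
  by_contra! hlt
  refine hne (mul_multiplicity_eq_of_pow_dvd_wtWronskian hf hq hp ?_)
  calc f ^ (multiplicity f q + multiplicity f p)
      ∣ f ^ (multiplicity f p * (k + 1)) := pow_dvd_pow f (by linarith)
    _ = (f ^ multiplicity f p) ^ (k + 1) := pow_mul _ _ _
    _ ∣ p ^ (k + 1) := pow_dvd_pow_of_dvd (pow_multiplicity_dvd f p) _
    _ ∣ wtWronskian n m q p := by rw [h, zsmul_eq_mul]; exact dvd_mul_left _ _

-- Otherwise every prime factor of `X * p` divides `q` more than `k` times as often as `p`, and the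
-- degree of `q` is too large.
lemma exists_prime_dvd_X_mul_and_mul_multiplicity_eq (hm : 0 < m) (hn : n ≤ k * m)
    (hp : p.natTrailingDegree < p.natDegree) (hq : q ≠ 0)
    (h : wtWronskian n m q p = c • p ^ (k + 1)) :
    ∃ f, Prime f ∧ f ∣ Polynomial.X * p ∧ n * multiplicity f p = m * multiplicity f q := by
  by_contra! hne
  have hp0 : p ≠ 0 := by rintro rfl; simp at hp
  obtain ⟨f, hf, hfp, hfX⟩ := exists_irreducible_dvd_not_dvd_X hp
  have hsq : Squarefree (Polynomial.X * f) :=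
    squarefree_mul_iff.mpr ⟨(hf.isRelPrime_iff_not_dvd.mpr hfX).symm,
      Polynomial.irreducible_X.squarefree, hf.squarefree⟩
  have hdvd : Polynomial.X * f * p ^ k ∣ q := by
    refine squarefree_mul_pow_dvd hsq (mul_ne_zero hsq.ne_zero (pow_ne_zero k hp0)) ?_
    refine fun g hg hgdvd => mul_emultiplicity_add_one_le_of_wtWronskian_eq_smul_pow
      hg.irreducible hp0 hq h (hne g hg ?_)
    exact (hg.dvd_or_dvd hgdvd).elim (fun h => h.trans (mul_dvd_mul_left _ hfp))
      fun h => h.mul_left _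
  have hlow := natDegree_le_of_dvd hdvd hq
  rw [natDegree_mul hsq.ne_zero (pow_ne_zero k hp0),
    natDegree_mul Polynomial.X_ne_zero hf.ne_zero, Polynomial.natDegree_X, natDegree_pow] at hlow
  have hupp := natDegree_le_of_wtWronskian_eq_smul_pow hp0 hq hm hn h
  have hpos := hf.natDegree_pos
  omega

theorem mul_natTrailingDegree_eq_or_le_of_wtWronskian_eq_smul_pow {e : ℤ} (hm : 0 < m)
    (he : 0 < e) (hn : n = k * m - e) (hp : p.natTrailingDegree < p.natDegree) (hq : q ≠ 0)
    (h : wtWronskian n m q p = c • p ^ (k + 1)) :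
    n * p.natTrailingDegree = m * q.natTrailingDegree ∨ m ≤ e * (p.support.card - 1) := by
  have hp0 : p ≠ 0 := by rintro rfl; simp at hp
  obtain ⟨f, hf, hfdvd, hres⟩ :=
    exists_prime_dvd_X_mul_and_mul_multiplicity_eq hm (by linarith) hp hq h
  by_cases hfX : f ∣ Polynomial.X
  · left
    have hassoc := (hf.irreducible.associated_of_dvd Polynomial.irreducible_X hfX).symm
    rwa [multiplicity_eq_of_associated_left hassoc, multiplicity_eq_of_associated_left hassoc,
      multiplicity_X_eq_natTrailingDegree hp0, multiplicity_X_eq_natTrailingDegree hq] at hres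
  · right
    have hpos : 0 < multiplicity f p :=
      Nat.pos_of_ne_zero (multiplicity_ne_zero.mpr ((hf.dvd_or_dvd hfdvd).resolve_left hfX))
    have hlt : multiplicity f p < p.support.card :=
      lt_card_support_of_pow_dvd hf.irreducible hfX hp0 (pow_multiplicity_dvd f p)
    have hdvd : m ∣ e * multiplicity f p :=
      ⟨k * multiplicity f p - multiplicity f q, by rw [hn] at hres; linarith⟩
    calc m ≤ e * multiplicity f p := Int.le_of_dvd (by positivity) hdvd
      _ ≤ e * (p.support.card - 1) := by gcongr; omega

end EqPow

end WeightedWronskian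

section Support

variable {F : Type*} [Field F] {ρ σ : ℤ} {P : MvPolynomial (Fin 2) F} {p q A B : ℕ × ℕ}

lemma mk_mem_Supp {d : Fin 2 →₀ ℕ} : (d 0, d 1) ∈ Supp P ↔ coeff d P ≠ 0 := by
  have hd : Finsupp.single 0 (d 0) + Finsupp.single 1 (d 1) = d := by
    ext i; fin_cases i <;> simp
  rw [Supp, Set.mem_ofPred_eq, hd]

lemma Supp_nonempty (hP : P ≠ 0) : (Supp P).Nonempty :=
  let ⟨_, hd⟩ := MvPolynomial.ne_zero_iff.mp hP
  ⟨_, mk_mem_Supp.mpr hd⟩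

namespace IsHomog

lemma isWeightedHomogeneous (hP : IsHomog ρ σ P) (hp : p ∈ Supp P) :
    IsWeightedHomogeneous ![ρ, σ] P (ρ * p.1 + σ * p.2) := by
  intro d hd
  rw [← hP _ (mk_mem_Supp.mpr hd) _ hp, Finsupp.weight_apply, Finsupp.sum_fintype _ _ (by simp)]
  simp [Fin.sum_univ_two, mul_comm]

lemma injOn_snd (hP : IsHomog ρ σ P) (hρ : ρ ≠ 0) : Set.InjOn Prod.snd (Supp P) := by
  intro p hp q hq h
  have hpq := hP p hp q hq
  rw [h, add_left_inj, mul_right_inj' hρ, Nat.cast_inj] at hpq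
  exact Prod.ext hpq h

lemma dvd_snd_sub_snd (hP : IsHomog ρ σ P) (hρσ : IsCoprime ρ σ) (hp : p ∈ Supp P)
    (hq : q ∈ Supp P) : ρ ∣ (q.2 - p.2 : ℤ) :=
  hρσ.dvd_of_dvd_mul_left ⟨p.1 - q.1, by linarith [hP p hp q hq]⟩

lemma leadSupp_eq (hP : IsHomog ρ σ P) : LeadSupp ρ σ P = Supp P := by
  ext p
  refine and_iff_left_of_imp fun hp => ?_
  have hval : {d : ℤ | ∃ q ∈ Supp P, d = ρ * q.1 + σ * q.2} = {ρ * p.1 + σ * p.2} := by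
    ext d
    exact ⟨fun ⟨q, hq, hd⟩ => hd.trans (hP q hq p hp), fun hd => ⟨p, hp, hd⟩⟩
  rw [wdeg, hval, csSup_singleton]

lemma snd_lt_snd_of_isSt_of_isEn (hP : IsHomog ρ σ P) (hρ : ρ ≠ 0) (hmono : ¬ IsMonomial P)
    (hA : IsSt ρ σ P A) (hB : IsEn ρ σ P B) : A.2 < B.2 := by
  contrapose! hmono
  rw [IsSt, hP.leadSupp_eq] at hA
  rw [IsEn, hP.leadSupp_eq] at hB
  have hsnd {p : ℕ × ℕ} (hp : p ∈ Supp P) : p.2 = A.2 :=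
    le_antisymm ((hB.2 p hp).trans hmono) (hA.2 p hp)
  exact fun p hp q hq => hP.injOn_snd hρ hp hq ((hsnd hp).trans (hsnd hq).symm)

end IsHomog

end Support

section Jacobian

lemma sum_weight_zsmul_X_mul_pderiv {ι R : Type*} [Fintype ι] [CommRing R] {w : ι → ℤ} {n : ℤ}
    {P : MvPolynomial ι R} (hP : IsWeightedHomogeneous w P n) :
    ∑ i, w i • (X i * pderiv i P) = n • P := by
  induction hP using IsWeightedHomogeneous.induction_on with
  | zero => simp
  | add p q _ _ hp hq => simp_rw [map_add, mul_add, smul_add, Finset.sum_add_distrib, hp, hq]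
  | monomial d c hd =>
    simp_rw [X_mul_pderiv_monomial, ← natCast_zsmul, smul_smul, ← Finset.sum_smul]
    rw [← hd, Finsupp.weight_apply, Finsupp.sum_fintype _ _ (by simp)]
    simp_rw [nsmul_eq_mul, mul_comm]

variable {F : Type*} [Field F] {ρ σ m n : ℤ} {P Q : MvPolynomial (Fin 2) F}

lemma isWeightedHomogeneous_Jb (hP : IsWeightedHomogeneous ![ρ, σ] P m)
    (hQ : IsWeightedHomogeneous ![ρ, σ] Q n) :
    IsWeightedHomogeneous ![ρ, σ] (Jb P Q) (m + n - ρ - σ) := by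
  have hx {P : MvPolynomial (Fin 2) F} {m : ℤ} (hP : IsWeightedHomogeneous ![ρ, σ] P m) :
      IsWeightedHomogeneous ![ρ, σ] (pderiv 0 P) (m - ρ) := hP.pderiv (sub_add_cancel m ρ)
  have hy {P : MvPolynomial (Fin 2) F} {m : ℤ} (hP : IsWeightedHomogeneous ![ρ, σ] P m) :
      IsWeightedHomogeneous ![ρ, σ] (pderiv 1 P) (m - σ) := hP.pderiv (sub_add_cancel m σ)
  have hPQ := (hx hP).mul (hy hQ)
  have hQP := (hx hQ).mul (hy hP)
  rw [show m - ρ + (n - σ) = m + n - ρ - σ by ring] at hPQ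
  rw [show n - ρ + (m - σ) = m + n - ρ - σ by ring] at hQP
  exact hPQ.sub hQP

lemma weight_eq_of_Jb_eq_pow {k : ℕ} (hP : IsWeightedHomogeneous ![ρ, σ] P m)
    (hQ : IsWeightedHomogeneous ![ρ, σ] Q n) (hQ0 : Q ≠ 0) (h : Jb P Q = Q ^ (k + 1)) :
    m = k * n + ρ + σ := by
  have hJb := isWeightedHomogeneous_Jb hP hQ
  rw [h] at hJb
  have := hJb.inj_right (pow_ne_zero _ hQ0) (hQ.pow (k + 1))
  rw [nsmul_eq_mul] at this
  push_cast at this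
  linarith

lemma smul_X_mul_Jb (hP : IsWeightedHomogeneous ![ρ, σ] P m)
    (hQ : IsWeightedHomogeneous ![ρ, σ] Q n) :
    ρ • (X 0 * Jb P Q) = m • (P * pderiv 1 Q) - n • (pderiv 1 P * Q) := by
  have hP' := sum_weight_zsmul_X_mul_pderiv hP
  have hQ' := sum_weight_zsmul_X_mul_pderiv hQ
  simp only [Fin.sum_univ_two, Matrix.cons_val_zero, Matrix.cons_val_one, zsmul_eq_mul]
    at hP' hQ' ⊢
  rw [Jb]
  linear_combination pderiv 1 Q * hP' - pderiv 1 P * hQ'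

end Jacobian

section Dehomogenization

variable {F : Type*} [Field F] {ρ σ m n : ℤ} {P Q : MvPolynomial (Fin 2) F} {A B : ℕ × ℕ}

/-- The dehomogenization `P(1, X)` of a bivariate polynomial. -/
def dehomog : MvPolynomial (Fin 2) F →ₐ[F] Polynomial F :=
  aeval ![1, Polynomial.X]

lemma dehomog_X_zero : dehomog (X 0 : MvPolynomial (Fin 2) F) = 1 := by
  simp [dehomog]

lemma dehomog_pderiv_one (P : MvPolynomial (Fin 2) F) :
    dehomog (pderiv 1 P) = Polynomial.derivative (dehomog P) := by
  induction P using MvPolynomial.induction_on with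
  | C a => simp [dehomog]
  | add p q hp hq => simp only [map_add, hp, hq]
  | mul_X p i hp =>
    simp only [pderiv_mul, map_add, map_mul, Polynomial.derivative_mul, hp]
    fin_cases i <;> simp [dehomog, pderiv_X]

lemma smul_dehomog_Jb (hP : IsWeightedHomogeneous ![ρ, σ] P m)
    (hQ : IsWeightedHomogeneous ![ρ, σ] Q n) :
    ρ • dehomog (Jb P Q) = wtWronskian m n (dehomog P) (dehomog Q) := by
  have h := congrArg dehomog (smul_X_mul_Jb hP hQ)
  simp only [map_sub, map_zsmul, map_mul, dehomog_X_zero, one_mul, dehomog_pderiv_one] at h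
  exact h

lemma coeff_dehomog (P : MvPolynomial (Fin 2) F) (j : ℕ) :
    (dehomog P).coeff j = ∑ d ∈ P.support with d 1 = j, coeff d P := by
  conv_lhs => rw [← P.support_sum_monomial_coeff]
  rw [map_sum, Polynomial.finsetSum_coeff, Finset.sum_filter]
  refine Finset.sum_congr rfl fun d _ => ?_
  rw [dehomog, aeval_monomial, Finsupp.prod_fintype _ _ (by simp)]
  simp [Fin.prod_univ_two, Polynomial.coeff_X_pow, eq_comm]

namespace IsHomog

lemma mem_support_dehomog (hP : IsHomog ρ σ P) (hρ : ρ ≠ 0) {j : ℕ} :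
    j ∈ (dehomog P).support ↔ ∃ p ∈ Supp P, p.2 = j := by
  rw [Polynomial.mem_support_iff, coeff_dehomog]
  constructor
  · intro h
    obtain ⟨d, hd, hcoeff⟩ := Finset.exists_ne_zero_of_sum_ne_zero h
    exact ⟨_, mk_mem_Supp.mpr hcoeff, (Finset.mem_filter.mp hd).2⟩
  · rintro ⟨p, hp, rfl⟩
    rw [Finset.sum_eq_single_of_mem (Finsupp.single 0 p.1 + Finsupp.single 1 p.2)]
    · exact hp
    · exact Finset.mem_filter.mpr ⟨mem_support_iff.mpr hp, by simp⟩
    · intro d hd hne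
      obtain ⟨hd, hd1⟩ := Finset.mem_filter.mp hd
      have hdp := hP.injOn_snd hρ (mk_mem_Supp.mpr (mem_support_iff.mp hd)) hp hd1
      refine absurd ?_ hne
      rw [← hdp]
      ext i; fin_cases i <;> simp

lemma dehomog_ne_zero (hP : IsHomog ρ σ P) (hρ : ρ ≠ 0) (h0 : P ≠ 0) : dehomog P ≠ 0 :=
  let ⟨p, hp⟩ := Supp_nonempty h0
  Polynomial.support_nonempty.mp ⟨p.2, (hP.mem_support_dehomog hρ).mpr ⟨p, hp, rfl⟩⟩

lemma natTrailingDegree_dehomog (hP : IsHomog ρ σ P) (hρ : ρ ≠ 0) (hA : IsSt ρ σ P A) :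
    (dehomog P).natTrailingDegree = A.2 := by
  rw [IsSt, hP.leadSupp_eq] at hA
  have hmem : A.2 ∈ (dehomog P).support := (hP.mem_support_dehomog hρ).mpr ⟨A, hA.1, rfl⟩
  refine le_antisymm (Polynomial.natTrailingDegree_le_of_mem_supp _ hmem) ?_
  obtain ⟨p, hp, hpdeg⟩ := (hP.mem_support_dehomog hρ).mp <|
    Polynomial.natTrailingDegree_mem_support_of_nonzero (Polynomial.support_nonempty.mp ⟨_, hmem⟩)
  exact hpdeg ▸ hA.2 p hp

lemma natDegree_dehomog (hP : IsHomog ρ σ P) (hρ : ρ ≠ 0) (hB : IsEn ρ σ P B) :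
    (dehomog P).natDegree = B.2 := by
  rw [IsEn, hP.leadSupp_eq] at hB
  have hmem : B.2 ∈ (dehomog P).support := (hP.mem_support_dehomog hρ).mpr ⟨B, hB.1, rfl⟩
  refine le_antisymm ?_ (Polynomial.le_natDegree_of_mem_supp _ hmem)
  obtain ⟨p, hp, hpdeg⟩ := (hP.mem_support_dehomog hρ).mp <|
    Polynomial.natDegree_mem_support_of_nonzero (Polynomial.support_nonempty.mp ⟨_, hmem⟩)
  exact hpdeg ▸ hB.2 p hp

end IsHomog

end Dehomogenization

section Edge

lemma mul_card_sub_one_le_of_dvd_sub {s : Finset ℕ} {r a b : ℤ} (hr : 0 < r) (hab : a ≤ b)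
    (hs : ∀ j ∈ s, a ≤ j ∧ j ≤ b ∧ r ∣ j - a) : r * (s.card - 1) ≤ b - a := by
  have hcard : s.card ≤ (Finset.Icc 0 ((b - a) / r)).card := by
    refine Finset.card_le_card_of_injOn (fun j : ℕ => (j - a) / r) (fun j hj => ?_) ?_
    · obtain ⟨ha, hb, -⟩ := hs j hj
      exact Finset.mem_coe.mpr <| Finset.mem_Icc.mpr
        ⟨Int.ediv_nonneg (sub_nonneg.mpr ha) hr.le, Int.ediv_le_ediv hr (by linarith)⟩
    · intro i hi j hj hij
      have := (Int.ediv_left_inj (hs i hi).2.2 (hs j hj).2.2).mp hij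
      omega
  have hquot : 0 ≤ (b - a) / r := Int.ediv_nonneg (sub_nonneg.mpr hab) hr.le
  rw [Int.card_Icc] at hcard
  calc r * (s.card - 1) ≤ r * ((b - a) / r) := by gcongr; omega
    _ ≤ b - a := Int.mul_ediv_self_le hr.ne'

lemma lt_of_weight_pos {ρ σ a b : ℤ} (hρ : 0 < ρ) (hρσ : ρ + σ < 0) (hb : 0 ≤ b)
    (h : 0 < ρ * a + σ * b) : b < a := by
  refine lt_of_mul_lt_mul_left (a := ρ) ?_ hρ.le
  linarith [mul_nonpos_of_nonpos_of_nonneg hρσ.le hb]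

lemma weight_le_sub_of_mul_eq_mul {ρ σ a b u v k : ℤ} (hcop : IsCoprime ρ σ) (hρ : 0 < ρ)
    (hρσ : ρ + σ < 0) (hb : 0 ≤ b) (hpos : 0 < ρ * a + σ * b)
    (huv : ρ * u + σ * v = k * (ρ * a + σ * b) + ρ + σ)
    (hres : (ρ * u + σ * v) * b = (ρ * a + σ * b) * v) : ρ * a + σ * b ≤ a - b := by
  obtain ⟨κ, hκ⟩ : ρ ∣ k * b - v + 1 :=
    hcop.dvd_of_dvd_mul_left ⟨u - k * a - 1, by linarith⟩
  have hmul : (ρ * a + σ * b) * κ = a - b := by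
    refine mul_left_cancel₀ hρ.ne' ?_
    rw [huv] at hres
    linear_combination hres - (ρ * a + σ * b) * hκ
  have hκpos : 0 < κ :=
    pos_of_mul_pos_right (hmul ▸ sub_pos.mpr (lt_of_weight_pos hρ hρσ hb hpos)) hpos.le
  calc ρ * a + σ * b ≤ (ρ * a + σ * b) * κ := le_mul_of_one_le_right hpos.le hκpos
    _ = a - b := hmul

variable {F : Type*} [Field F] {ρ σ : ℤ} {R G : MvPolynomial (Fin 2) F} {A B : ℕ × ℕ}

lemma IsHomog.mul_card_support_dehomog_sub_one_le (hR : IsHomog ρ σ R) (hρ : 0 < ρ)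
    (hcop : IsCoprime ρ σ) (hA : IsSt ρ σ R A) (hB : IsEn ρ σ R B) :
    ρ * ((dehomog R).support.card - 1) ≤ B.2 - A.2 := by
  rw [IsSt, hR.leadSupp_eq] at hA
  rw [IsEn, hR.leadSupp_eq] at hB
  refine mul_card_sub_one_le_of_dvd_sub hρ (by exact_mod_cast hA.2 B hB.1) fun j hj => ?_
  obtain ⟨p, hp, rfl⟩ := (hR.mem_support_dehomog hρ.ne').mp hj
  exact ⟨by exact_mod_cast hA.2 p hp, by exact_mod_cast hB.2 p hp,
    hR.dvd_snd_sub_snd hcop hA.1 hp⟩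

lemma weight_le_fst_sub_snd_or_le_mul_card [CharZero F] (hcop : IsCoprime ρ σ) (hρ : 0 < ρ)
    (hρσ : ρ + σ < 0) (hR : IsHomog ρ σ R) (hmono : ¬ IsMonomial R) (hA : IsSt ρ σ R A)
    (hB : IsEn ρ σ R B) (hpos : 0 < ρ * A.1 + σ * A.2) (hG : IsHomog ρ σ G) {k : ℕ}
    (hJb : Jb G R = R ^ (k + 1)) :
    ρ * A.1 + σ * A.2 ≤ (A.1 - A.2 : ℤ) ∨
      ρ * A.1 + σ * A.2 ≤ -(ρ + σ) * ((dehomog R).support.card - 1) := by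
  have hR0 : R ≠ 0 := by rintro rfl; exact hmono (by simp [IsMonomial, Supp])
  have hG0 : G ≠ 0 := by
    rintro rfl
    exact pow_ne_zero (k + 1) hR0 (by rw [← hJb]; simp [Jb])
  have hq : dehomog G ≠ 0 := hG.dehomog_ne_zero hρ.ne' hG0
  obtain ⟨g, hg, hgdeg⟩ := (hG.mem_support_dehomog hρ.ne').mp
    (Polynomial.natTrailingDegree_mem_support_of_nonzero hq)
  have hGw := hG.isWeightedHomogeneous hg
  have hRw := hR.isWeightedHomogeneous hA.1.1
  have hn := weight_eq_of_Jb_eq_pow hGw hRw hR0 hJb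
  have hW := smul_dehomog_Jb hGw hRw
  rw [hJb, map_pow] at hW
  have hdeg : (dehomog R).natTrailingDegree < (dehomog R).natDegree := by
    rw [hR.natTrailingDegree_dehomog hρ.ne' hA, hR.natDegree_dehomog hρ.ne' hB]
    exact hR.snd_lt_snd_of_isSt_of_isEn hρ.ne' hmono hA hB
  refine (mul_natTrailingDegree_eq_or_le_of_wtWronskian_eq_smul_pow hpos
    (neg_pos.mpr hρσ) (by rw [hn]; ring) hdeg hq hW.symm).imp_left fun hres => ?_
  rw [hR.natTrailingDegree_dehomog hρ.ne' hA, ← hgdeg] at hres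
  exact weight_le_sub_of_mul_eq_mul hcop hρ hρσ (Nat.cast_nonneg _) hpos hn hres

theorem weight_le_fst_sub_snd_sub_one [CharZero F] (hcop : IsCoprime ρ σ) (hρ : 0 < ρ)
    (hρσ : ρ + σ < 0) (hR : IsHomog ρ σ R) (hmono : ¬ IsMonomial R) (hA : IsSt ρ σ R A)
    (hB : IsEn ρ σ R B) (hpos : 0 < ρ * B.1 + σ * B.2) (hG : IsHomog ρ σ G) {k : ℕ}
    (hJb : Jb G R = R ^ (k + 1)) : ρ * B.1 + σ * B.2 ≤ (B.1 - B.2 - 1 : ℤ) := by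
  have hweight : ρ * A.1 + σ * A.2 = ρ * B.1 + σ * B.2 := hR A hA.1.1 B hB.1.1
  have hgap : ρ * ((B.1 - B.2) - (A.1 - A.2)) = -(ρ + σ) * (B.2 - A.2) := by
    linear_combination -hweight
  have hAB : (A.2 : ℤ) < B.2 := by exact_mod_cast hR.snd_lt_snd_of_isSt_of_isEn hρ.ne' hmono hA hB
  rw [← hweight] at hpos ⊢
  rcases weight_le_fst_sub_snd_or_le_mul_card hcop hρ hρσ hR hmono hA hB hpos hG hJb with h | h
  · have hlt : (A.1 - A.2 : ℤ) < B.1 - B.2 := by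
      refine sub_pos.mp (pos_of_mul_pos_right (a := ρ) ?_ hρ.le)
      rw [hgap]
      exact mul_pos (neg_pos.mpr hρσ) (sub_pos.mpr hAB)
    linarith
  · have hspread : -(ρ + σ) * ((dehomog R).support.card - 1) ≤ (B.1 - B.2) - (A.1 - A.2) := by
      refine le_of_mul_le_mul_left (a := ρ) ?_ hρ
      rw [hgap, mul_left_comm]
      exact mul_le_mul_of_nonneg_left
        (hR.mul_card_support_dehomog_sub_one_le hρ hcop hA hB) (neg_pos.mpr hρσ).le
    have hApos := lt_of_weight_pos hρ hρσ (Nat.cast_nonneg _) hpos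
    linarith

lemma le_sq_of_weight_le {ρ σ a b : ℤ} (hρ : 0 ≤ ρ) (hρσ : ρ + σ < 0) (hb : 0 ≤ b)
    (hval : ρ ≤ ρ * a + σ * b) (h : ρ * a + σ * b ≤ a - b - 1) :
    b ≤ (a - b - 1) ^ 2 := by
  have hρD : ρ ≤ a - b - 1 := hval.trans h
  calc b ≤ -(ρ + σ) * b := le_mul_of_one_le_left hb (by linarith)
    _ ≤ ρ * (a - b - 1) := by linarith
    _ ≤ (a - b - 1) * (a - b - 1) := mul_le_mul_of_nonneg_right hρD (hρ.trans hρD)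
    _ = (a - b - 1) ^ 2 := (sq _).symm

end Edge

/-- Proposition "cota": if `(a',b')` is a possible `A₀′`, then `b' < a'` and
`b' ≤ (a' − b' − 1)²`. -/
theorem stmt14 (K : Type*) [Field K] [CharZero K]
    (a' b' : ℕ) (h : PossibleA0 K (a', b')) :
    b' < a' ∧ (b' : ℤ) ≤ ((a' : ℤ) - (b' : ℤ) - 1) ^ 2 := by
  obtain ⟨k, ch, hk⟩ := h
  rcases Nat.eq_zero_or_pos k with rfl | hk1
  · obtain ⟨l, hl, hC⟩ := ch.hC0
    obtain ⟨rfl, rfl⟩ := Prod.mk.inj (hk.symm.trans hC)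
    exact ⟨hl, by simpa using sq_nonneg _⟩
  · obtain ⟨hgcd, hρ, hρσ⟩ := ch.hdir k hk1 le_rfl
    obtain ⟨G, i, hi, hG, hJb⟩ := ch.hG k hk1 le_rfl
    have hval := ch.hval k hk1 le_rfl
    have hbound := weight_le_fst_sub_snd_sub_one (Int.isCoprime_iff_gcd_eq_one.mpr hgcd) hρ hρσ
      (ch.hhom k hk1 le_rfl) (ch.hmono k hk1 le_rfl) (ch.hst k hk1 le_rfl)
      (ch.hen k hk1 le_rfl) (hρ.trans_le hval) hG (k := i - 1) (by rwa [Nat.sub_add_cancel hi])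
    have hlt := ch.hdiag k hk1 le_rfl
    rw [hk] at hval hbound hlt
    exact ⟨hlt, le_sq_of_weight_le hρ.le hρσ (Nat.cast_nonneg _) hval hbound⟩

end
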